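/- arXiv:1508.02666 — 4 statements merged into one kernel-verified Lean document; each statement's English description precedes it below -/
import Mathlib

section
/- Let F be a finite family of dyadic cubes in [0,1]³ (possibly of different levels) whose interiors are pairwise disjoint. Then the number of unordered pairs {Q, Q'} of distinct cubes in F that are adjacent (closed intersection nonempty) is at most 26·|F|. -/
/-- A dyadic cube of level `l` in `[0,1]³`, recorded by its level and the integer
coordinates `a i < 2 ^ l` of its lower corner. -/
structure DyadicCube where
  l : ℕ
  a : Fin 3 → ℕ
  ha : ∀ i, a i < 2 ^ l

/-- The closed cube `∏ᵢ [aᵢ·2^{-l}, (aᵢ+1)·2^{-l}] ⊆ [0,1]³` associated to a dyadic cube. -/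
def DyadicCube.toSet (Q : DyadicCube) : Set (Fin 3 → ℝ) :=
  {x | ∀ i, (Q.a i : ℝ) / 2 ^ Q.l ≤ x i ∧ x i ≤ ((Q.a i : ℝ) + 1) / 2 ^ Q.l}

/-- Two dyadic cubes are adjacent if their (closed) intersection is nonempty. -/
def DyadicCube.Adjacent (Q Q' : DyadicCube) : Prop :=
  (Q.toSet ∩ Q'.toSet).Nonempty

/-!
Charge every adjacent pair to its smaller cube `Q`. A cube at least as large as `Q`, with corners on
a grid that the grid of `Q` refines, is a union of cells of the finer grid; if it meets `Q`, it
contains one of the `3 ^ 3` cells of the block centred at `Q`. Since interiors are disjoint, no two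
cubes of the family contain the same cell, and `Q` itself takes one of them, so `Q` is charged at
most `3 ^ 3 - 1 = 26` times.
-/

open Finset

variable {ι κ : Type*}

/-- The closed cube of side `r` whose lower corner is the point `r • a` of the grid `r • ℤ^ι`,
so that `r = 2⁻ˡ` gives the dyadic cubes of level `l`. Meaningful for `0 ≤ r` only. -/
def gridCube (r : ℝ) (a : ι → ℤ) : Set (ι → ℝ) :=
  Set.Icc (fun i ↦ r * a i) (fun i ↦ r * (a i + 1))

theorem gridCube_nonempty {r : ℝ} (hr : 0 ≤ r) (a : ι → ℤ) : (gridCube r a).Nonempty :=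
  Set.nonempty_Icc.2 fun _ ↦ mul_le_mul_of_nonneg_left (lt_add_one _).le hr

theorem interior_gridCube_nonempty [Finite ι] {r : ℝ} (hr : 0 < r) (a : ι → ℤ) :
    (interior (gridCube r a)).Nonempty := by
  simp only [gridCube, ← Set.pi_univ_Icc, interior_pi_set Set.finite_univ, interior_Icc,
    Set.univ_pi_nonempty_iff, Set.nonempty_Ioo]
  exact fun _ ↦ mul_lt_mul_of_pos_left (lt_add_one _) hr

theorem exists_mem_Icc_and_mem_Ico {m u v : ℤ} (huv : u < v) (hu : u ≤ m + 1)
    (hv : m ≤ v) : ∃ e ∈ Set.Icc (m - 1) (m + 1), e ∈ Set.Ico u v :=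
  ⟨max u (min m (v - 1)), by simp only [Set.mem_Icc]; lia, by simp only [Set.mem_Ico]; lia⟩

theorem exists_gridCube_subset_Icc {r : ℝ} (hr : 0 < r) {a u v : ι → ℤ} (huv : ∀ i, u i < v i)
    (h : (gridCube r a ∩ Set.Icc (fun i ↦ r * u i) (fun i ↦ r * v i)).Nonempty) :
    ∃ e ∈ Set.Icc (a - 1) (a + 1),
      gridCube r e ⊆ Set.Icc (fun i ↦ r * u i) (fun i ↦ r * v i) := by
  obtain ⟨x, ⟨hax, hxa⟩, hux, hxv⟩ := h
  have hu (i : ι) : (u i : ℝ) ≤ a i + 1 := le_of_mul_le_mul_left ((hux i).trans (hxa i)) hr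
  have hv (i : ι) : (a i : ℝ) ≤ v i := le_of_mul_le_mul_left ((hax i).trans (hxv i)) hr
  choose e hea heuv using fun i ↦
    exists_mem_Icc_and_mem_Ico (huv i) (mod_cast hu i) (mod_cast hv i)
  have hue (i : ι) : (u i : ℝ) ≤ e i := mod_cast (heuv i).1
  have hev (i : ι) : (e i + 1 : ℝ) ≤ v i := mod_cast Int.add_one_le_of_lt (heuv i).2
  exact ⟨e, ⟨fun i ↦ (hea i).1, fun i ↦ (hea i).2⟩, Set.Icc_subset_Icc
    (fun i ↦ mul_le_mul_of_nonneg_left (hue i) hr.le)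
    (fun i ↦ mul_le_mul_of_nonneg_left (hev i) hr.le)⟩

theorem exists_gridCube_subset_gridCube {r s : ℝ} (hr : 0 < r) (hs : 0 < s)
    (hrs : ∃ m : ℕ, s = m * r) {a b : ι → ℤ} (h : (gridCube r a ∩ gridCube s b).Nonempty) :
    ∃ e ∈ Set.Icc (a - 1) (a + 1), gridCube r e ⊆ gridCube s b := by
  obtain ⟨m, rfl⟩ := hrs
  have hm : (0 : ℤ) < m := by exact_mod_cast pos_of_mul_pos_left hs hr.le
  have hb : gridCube (m * r) b =
      Set.Icc (fun i ↦ r * (m * b i : ℤ)) (fun i ↦ r * (m * (b i + 1) : ℤ)) := by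
    simp only [gridCube, Int.cast_mul, Int.cast_add, Int.cast_natCast, Int.cast_one,
      mul_left_comm r, mul_assoc]
  rw [hb] at h ⊢
  exact exists_gridCube_subset_Icc hr (fun i ↦ mul_lt_mul_of_pos_left (lt_add_one _) hm) h

theorem card_Icc_sub_one_add_one [Fintype ι] [DecidableEq ι] (a : ι → ℤ) :
    #(Icc (a - 1) (a + 1)) = 3 ^ Fintype.card ι := by
  have hcard (m : ℤ) : #(Icc (m - 1) (m + 1)) = 3 := by
    rw [Int.card_Icc]
    lia
  simp [Pi.card_Icc, hcard]

theorem card_le_three_pow_of_pairwiseDisjoint_interior [Fintype ι] {r : ℝ} (hr : 0 < r) (a : ι → ℤ)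
    {G : Finset κ} {s : κ → ℝ} {b : κ → ι → ℤ} (hs : ∀ k ∈ G, 0 < s k)
    (hrs : ∀ k ∈ G, ∃ m : ℕ, s k = m * r)
    (hadj : ∀ k ∈ G, (gridCube r a ∩ gridCube (s k) (b k)).Nonempty)
    (hdisj : (G : Set κ).PairwiseDisjoint fun k ↦ interior (gridCube (s k) (b k))) :
    #G ≤ 3 ^ Fintype.card ι := by
  classical
  rw [← card_Icc_sub_one_add_one a]
  refine card_le_card_of_forall_subsingleton (fun k e ↦ gridCube r e ⊆ gridCube (s k) (b k))
    (fun k hk ↦ ?_) fun e _ j hj k hk ↦ ?_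
  · simpa only [mem_Icc, Set.mem_Icc] using
      exists_gridCube_subset_gridCube hr (hs k hk) (hrs k hk) (hadj k hk)
  · obtain ⟨x, hx⟩ := interior_gridCube_nonempty hr e
    exact hdisj.elim_set hj.1 hk.1 x (interior_mono hj.2 hx) (interior_mono hk.2 hx)

open Classical in
theorem card_coarser_adjacent_le [Fintype ι] {F : Finset κ} {r : κ → ℝ} {a : κ → ι → ℤ}
    (hr : ∀ k ∈ F, 0 < r k)
    (hdisj : (F : Set κ).PairwiseDisjoint fun k ↦ interior (gridCube (r k) (a k)))
    {j : κ} (hj : j ∈ F) :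
    #{k ∈ F | j ≠ k ∧ (gridCube (r j) (a j) ∩ gridCube (r k) (a k)).Nonempty ∧
      ∃ m : ℕ, r k = m * r j} ≤ 3 ^ Fintype.card ι - 1 := by
  let G : Finset κ := {k ∈ F | (gridCube (r j) (a j) ∩ gridCube (r k) (a k)).Nonempty ∧
    ∃ m : ℕ, r k = m * r j}
  have hjG : j ∈ G := by
    refine mem_filter.2 ⟨hj, ?_, 1, by simp⟩
    simpa only [Set.inter_self] using gridCube_nonempty (hr j hj).le (a j)
  have hG : #G ≤ 3 ^ Fintype.card ι :=
    card_le_three_pow_of_pairwiseDisjoint_interior (hr j hj) (a j)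
      (fun k hk ↦ hr k (mem_filter.1 hk).1) (fun k hk ↦ (mem_filter.1 hk).2.2)
      (fun k hk ↦ (mem_filter.1 hk).2.1) (hdisj.subset (filter_subset _ F))
  calc _ = #(G.erase j) := by congr 1; grind
    _ = #G - 1 := card_erase_of_mem hjG
    _ ≤ 3 ^ Fintype.card ι - 1 := Nat.sub_le_sub_right hG 1

theorem ncard_pairs_le_mul_card {F : Finset κ} {R : κ → κ → Prop} [DecidableRel R] {d : ℕ}
    (hd : ∀ j ∈ F, #{k ∈ F | R j k} ≤ d) {P : Set (Set κ)}
    (hP : ∀ S ∈ P, ∃ j ∈ F, ∃ k ∈ F, R j k ∧ S = {j, k}) : P.ncard ≤ d * #F := by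
  classical
  let T : Finset (Set κ) := F.biUnion fun j ↦ {k ∈ F | R j k}.image fun k ↦ {j, k}
  have hPT : P ⊆ T := by
    intro S hS
    obtain ⟨j, hj, k, hk, hjk, rfl⟩ := hP S hS
    exact mem_biUnion.2 ⟨j, hj, mem_image_of_mem _ (mem_filter.2 ⟨hk, hjk⟩)⟩
  calc P.ncard ≤ #T := by
        simpa only [Set.ncard_coe_finset] using Set.ncard_le_ncard hPT T.finite_toSet
    _ ≤ #F * d := card_biUnion_le_card_mul _ _ _ fun j hj ↦ card_image_le.trans (hd j hj)
    _ = d * #F := mul_comm _ _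

theorem card_adjacent_pairs_le_26_mul_card_general [Fintype ι] (F : Finset κ) (r : κ → ℝ)
    (a : κ → ι → ℤ) (hr : ∀ k ∈ F, 0 < r k)
    (hmul : ∀ j ∈ F, ∀ k ∈ F, (∃ m : ℕ, r k = m * r j) ∨ ∃ m : ℕ, r j = m * r k)
    (hdisj : (F : Set κ).PairwiseDisjoint fun k ↦ interior (gridCube (r k) (a k))) :
    {S : Set κ | ∃ j k, j ∈ F ∧ k ∈ F ∧ j ≠ k ∧
      (gridCube (r j) (a j) ∩ gridCube (r k) (a k)).Nonempty ∧ S = {j, k}}.ncard ≤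
        (3 ^ Fintype.card ι - 1) * #F := by
  classical
  refine ncard_pairs_le_mul_card (fun j hj ↦ card_coarser_adjacent_le hr hdisj hj) ?_
  rintro S ⟨j, k, hj, hk, hne, hjk, rfl⟩
  obtain hm | hm := hmul j hj k hk
  · exact ⟨j, hj, k, hk, ⟨hne, hjk, hm⟩, rfl⟩
  · exact ⟨k, hk, j, hj, ⟨hne.symm, Set.inter_comm _ _ ▸ hjk, hm⟩, Set.pair_comm j k⟩

theorem DyadicCube.toSet_eq_gridCube (Q : DyadicCube) :
    Q.toSet = gridCube (2 ^ Q.l)⁻¹ (fun i ↦ (Q.a i : ℤ)) := by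
  ext x
  simp [toSet, gridCube, Pi.le_def, forall_and, div_eq_inv_mul]

theorem exists_inv_two_pow_eq_mul {m n : ℕ} (h : m ≤ n) :
    ∃ k : ℕ, ((2 : ℝ) ^ m)⁻¹ = k * (2 ^ n)⁻¹ := by
  refine ⟨2 ^ (n - m), ?_⟩
  rw [Nat.cast_pow, Nat.cast_ofNat, pow_sub₀ _ two_ne_zero h]
  field_simp

/-- If `F` is a finite family of dyadic cubes in `[0,1]³` with pairwise
disjoint interiors, then the number of unordered pairs `{Q, Q'}` of distinct cubes of `F`
that are adjacent is at most `26·|F|`. -/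
theorem card_adjacent_pairs_le_26_mul_card
    (F : Finset DyadicCube)
    (hdisj : ∀ Q ∈ F, ∀ Q' ∈ F, Q ≠ Q' →
      interior Q.toSet ∩ interior Q'.toSet = ∅) :
    {S : Set DyadicCube | ∃ Q Q', Q ∈ F ∧ Q' ∈ F ∧ Q ≠ Q' ∧ Q.Adjacent Q' ∧
      S = {Q, Q'}}.ncard ≤ 26 * F.card := by
  simp only [DyadicCube.Adjacent, DyadicCube.toSet_eq_gridCube] at hdisj ⊢
  exact card_adjacent_pairs_le_26_mul_card_general F (fun Q ↦ (2 ^ Q.l)⁻¹) (fun Q i ↦ Q.a i)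
    (fun Q _ ↦ by positivity)
    (fun Q _ Q' _ ↦ (le_total Q'.l Q.l).imp exists_inv_two_pow_eq_mul exists_inv_two_pow_eq_mul)
    fun Q hQ Q' hQ' hne ↦ Set.disjoint_iff_inter_eq_empty.2 (hdisj Q hQ Q' hQ' hne)
end

section
/- For every γ ∈ (0,1), the Hausdorff dimension of the generalized Cantor set C_γ equals log 2 / log(2/(1−γ)). -/
/-- The generalized Cantor set `C_γ`: with `a = (1+γ)/2` and `b = (1−γ)/2`, the set of
sums `∑ dᵢ bⁱ` over sequences with `dᵢ ∈ {0, a}`. -/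
def genCantorSet (γ : ℝ) : Set ℝ :=
  {x | ∃ d : ℕ → ℝ, (∀ i, d i = 0 ∨ d i = (1 + γ) / 2) ∧
       x = ∑' i, d i * ((1 - γ) / 2) ^ i}

/-!
Two points of a Cantor set built with contraction ratio `r` whose addresses first differ at place
`n` are at distance comparable to `r ^ n`. Let `s` be the exponent with `m * r ^ s = 1`, where `m`
is the number of digits. The `m ^ n` cylinders of level `n` cover the set, and the sum of the
`s`-th powers of their diameters stays bounded, so the dimension is at most `s`. Conversely,
reading an address as a base `m` expansion sends points at distance about `r ^ n` to points at
distance at most `m⁻¹ ^ n = (r ^ n) ^ s`; this is an `s`-Hölder map onto `[0, 1]`, so the dimension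
is at least `s`.
-/

open Set Filter Topology MeasureTheory
open scoped NNReal ENNReal

section HausdorffDimension

theorem dimH_range_le_of_edist_le_rpow {α X Y : Type*} [EMetricSpace X] [EMetricSpace Y]
    {f : α → X} {g : α → Y} {C s : ℝ≥0} (hs : 0 < s)
    (h : ∀ x y, edist (g x) (g y) ≤ C * edist (f x) (f y) ^ (s : ℝ)) :
    dimH (range g) ≤ dimH (range f) / s := by
  cases isEmpty_or_nonempty Y
  · simp [Set.eq_empty_of_isEmpty]
  have factors : g.FactorsThrough f := fun x y hxy ↦ by
    simpa [hxy, NNReal.coe_pos.2 hs] using h x y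
  obtain ⟨k, rfl⟩ := (Function.factorsThrough_iff g).1 factors
  have holder : HolderOnWith C s k (range f) := by
    rintro _ ⟨x, rfl⟩ _ ⟨y, rfl⟩
    exact h x y
  simpa only [range_comp] using holder.dimH_image_le hs

variable {ι X : Type*} {K : (ℕ → ι) → X} {r s : ℝ≥0}

theorem edist_le_pow_of_forall_lt_eq [PseudoEMetricSpace X] {C : ℝ≥0} (hr : r ≤ 1)
    (hK : ∀ x y, x ≠ y → edist (K x) (K y) ≤ C * r ^ PiNat.firstDiff x y)
    {x y : ℕ → ι} {n : ℕ} (hxy : ∀ i < n, x i = y i) : edist (K x) (K y) ≤ C * r ^ n := by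
  rcases eq_or_ne x y with rfl | hne
  · simp
  · have hn : n ≤ PiNat.firstDiff x y := (PiNat.mem_cylinder_iff_le_firstDiff hne n).1 hxy
    refine (hK x y hne).trans (mul_le_mul_right ?_ _)
    exact_mod_cast pow_le_pow_of_le_one zero_le hr hn

theorem sum_rpow_le_of_card_mul_rpow_le_one [Fintype ι] {C : ℝ≥0}
    (hrs : Fintype.card ι * r ^ (s : ℝ) ≤ 1) {n : ℕ} {f : (Fin n → ι) → ℝ≥0∞}
    (hf : ∀ v, f v ≤ C * r ^ n) : ∑ v, f v ^ (s : ℝ) ≤ (C : ℝ≥0∞) ^ (s : ℝ) := by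
  have hrs' : (Fintype.card ι : ℝ≥0∞) * (r : ℝ≥0∞) ^ (s : ℝ) ≤ 1 := by
    rw [← ENNReal.coe_rpow_of_nonneg _ s.coe_nonneg]
    exact_mod_cast hrs
  calc ∑ v, f v ^ (s : ℝ)
      ≤ ∑ _v : Fin n → ι, (C * r ^ n : ℝ≥0∞) ^ (s : ℝ) := by
        gcongr with v
        exact hf v
    _ = (C : ℝ≥0∞) ^ (s : ℝ) * (Fintype.card ι * (r : ℝ≥0∞) ^ (s : ℝ)) ^ n := by
        rw [Finset.sum_const, Finset.card_univ, Fintype.card_pi_const, nsmul_eq_mul, Nat.cast_pow,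
          ENNReal.mul_rpow_of_nonneg _ _ s.coe_nonneg, mul_pow, mul_left_comm]
        simp only [← ENNReal.rpow_natCast, ← ENNReal.rpow_mul, mul_comm]
    _ ≤ (C : ℝ≥0∞) ^ (s : ℝ) := mul_le_of_le_one_right' (pow_le_one' hrs' n)

theorem hausdorffMeasure_range_le_of_edist_le_pow_firstDiff [EMetricSpace X] [MeasurableSpace X]
    [BorelSpace X] [Fintype ι] {C : ℝ≥0} (hr : r < 1)
    (hrs : Fintype.card ι * r ^ (s : ℝ) ≤ 1)
    (hK : ∀ x y, x ≠ y → edist (K x) (K y) ≤ C * r ^ PiNat.firstDiff x y) :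
    μH[s] (range K) ≤ (C : ℝ≥0∞) ^ (s : ℝ) := by
  let cyl (n : ℕ) (v : Fin n → ι) : Set X := K '' {x | ∀ i : Fin n, x i = v i}
  have ediam_cyl_le (n : ℕ) (v : Fin n → ι) : Metric.ediam (cyl n v) ≤ C * r ^ n := by
    refine Metric.ediam_le ?_
    rintro _ ⟨x, hx, rfl⟩ _ ⟨y, hy, rfl⟩
    exact edist_le_pow_of_forall_lt_eq hr.le hK fun i hi ↦ (hx ⟨i, hi⟩).trans (hy ⟨i, hi⟩).symm
  have range_subset (n : ℕ) : range K ⊆ ⋃ v, cyl n v := by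
    rintro _ ⟨x, rfl⟩
    exact mem_iUnion.2 ⟨fun i ↦ x i, x, fun _ ↦ rfl, rfl⟩
  have tendsto_bound : Tendsto (fun n : ℕ ↦ (C * r ^ n : ℝ≥0∞)) atTop (𝓝 0) := by
    simpa using ENNReal.Tendsto.const_mul
      (ENNReal.tendsto_pow_atTop_nhds_zero_of_lt_one (by exact_mod_cast hr))
      (.inr ENNReal.coe_ne_top)
  calc μH[s] (range K)
      ≤ liminf (fun n ↦ ∑ v, Metric.ediam (cyl n v) ^ (s : ℝ)) atTop :=
        Measure.hausdorffMeasure_le_liminf_sum _ _ _ tendsto_bound cyl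
          (.of_forall ediam_cyl_le) (.of_forall range_subset)
    _ ≤ liminf (fun _ : ℕ ↦ (C : ℝ≥0∞) ^ (s : ℝ)) atTop :=
        liminf_le_liminf (.of_forall fun n ↦
          sum_rpow_le_of_card_mul_rpow_le_one hrs (ediam_cyl_le n))
    _ = (C : ℝ≥0∞) ^ (s : ℝ) := liminf_const _

theorem dimH_range_le_of_edist_le_pow_firstDiff [EMetricSpace X] [Fintype ι] {C : ℝ≥0} (hr : r < 1)
    (hrs : Fintype.card ι * r ^ (s : ℝ) ≤ 1)
    (hK : ∀ x y, x ≠ y → edist (K x) (K y) ≤ C * r ^ PiNat.firstDiff x y) :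
    dimH (range K) ≤ s := by
  borelize X
  exact dimH_le_of_hausdorffMeasure_ne_top <| ne_top_of_le_ne_top
    (ENNReal.rpow_ne_top_of_nonneg s.coe_nonneg ENNReal.coe_ne_top)
    (hausdorffMeasure_range_le_of_edist_le_pow_firstDiff hr hrs hK)

theorem range_ofDigits {b : ℕ} (hb : 1 < b) :
    range (Real.ofDigits : (ℕ → Fin b) → ℝ) = Icc 0 1 := by
  refine Subset.antisymm ?_ (by simpa [SurjOn] using Real.ofDigits_SurjOn hb)
  rintro _ ⟨x, rfl⟩
  exact ⟨Real.ofDigits_nonneg x, Real.ofDigits_le_one x⟩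

theorem edist_ofDigits_comp_le {b : ℕ} (e : ι → Fin b) (x y : ℕ → ι) :
    edist (Real.ofDigits (e ∘ x)) (Real.ofDigits (e ∘ y)) ≤
      ((b : ℝ≥0)⁻¹ ^ PiNat.firstDiff x y : ℝ≥0) := by
  rw [edist_le_coe, ← NNReal.coe_le_coe, coe_nndist, Real.dist_eq]
  push_cast
  rw [inv_pow]
  exact Real.abs_ofDigits_sub_ofDigits_le fun i hi ↦
    congrArg e (PiNat.apply_eq_of_lt_firstDiff hi)

theorem edist_ofDigits_comp_le_mul_rpow [PseudoEMetricSpace X] {b : ℕ} (e : ι → Fin b) {c : ℝ≥0}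
    (hc : c ≠ 0) (hrs : 1 ≤ b * r ^ (s : ℝ))
    (hK : ∀ x y, x ≠ y → c * r ^ PiNat.firstDiff x y ≤ edist (K x) (K y)) (x y : ℕ → ι) :
    edist (Real.ofDigits (e ∘ x)) (Real.ofDigits (e ∘ y)) ≤
      (c⁻¹ ^ (s : ℝ) : ℝ≥0) * edist (K x) (K y) ^ (s : ℝ) := by
  rcases eq_or_ne x y with rfl | hne
  · simp
  have b_pos : 0 < b := Nat.pos_of_ne_zero fun hb ↦ by simp [hb] at hrs
  have inv_le : (b : ℝ≥0)⁻¹ ≤ r ^ (s : ℝ) := (inv_le_iff_one_le_mul₀' (mod_cast b_pos)).2 hrs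
  set n := PiNat.firstDiff x y
  calc edist (Real.ofDigits (e ∘ x)) (Real.ofDigits (e ∘ y))
      ≤ ((b : ℝ≥0)⁻¹ ^ n : ℝ≥0) := edist_ofDigits_comp_le e x y
    _ ≤ ((r ^ (s : ℝ)) ^ n : ℝ≥0) := mod_cast pow_le_pow_left₀ zero_le inv_le n
    _ = ((c⁻¹ ^ (s : ℝ) * (c * r ^ n) ^ (s : ℝ) : ℝ≥0) : ℝ≥0∞) := by
        rw [← NNReal.mul_rpow, inv_mul_cancel_left₀ hc, ← NNReal.rpow_natCast,
          ← NNReal.rpow_natCast, ← NNReal.rpow_mul, ← NNReal.rpow_mul, mul_comm]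
    _ ≤ (c⁻¹ ^ (s : ℝ) : ℝ≥0) * edist (K x) (K y) ^ (s : ℝ) := by
        rw [ENNReal.coe_mul, ENNReal.coe_rpow_of_nonneg (c * r ^ n) s.coe_nonneg]
        gcongr
        exact_mod_cast hK x y hne

theorem le_dimH_range_of_pow_firstDiff_le_edist [EMetricSpace X] [Fintype ι] [Nontrivial ι]
    {c : ℝ≥0} (hc : c ≠ 0) (hrs : 1 ≤ Fintype.card ι * r ^ (s : ℝ))
    (hK : ∀ x y, x ≠ y → c * r ^ PiNat.firstDiff x y ≤ edist (K x) (K y)) :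
    s ≤ dimH (range K) := by
  rcases eq_zero_or_pos s with rfl | hs
  · simp
  let e := Fintype.equivFin ι
  let expansion : (ℕ → ι) → ℝ := fun x ↦ Real.ofDigits (e ∘ x)
  have range_expansion : range expansion = Icc 0 1 := by
    rw [← range_ofDigits (Fintype.one_lt_card (α := ι))]
    exact (e.surjective.comp_left (α := ℕ)).range_comp Real.ofDigits
  have one_le_div : 1 ≤ dimH (range K) / s := by
    calc (1 : ℝ≥0∞) = dimH (range expansion) := by
          rw [range_expansion, Real.dimH_of_nonempty_interior (by simp)]
          simp
      _ ≤ dimH (range K) / s :=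
          dimH_range_le_of_edist_le_rpow hs (edist_ofDigits_comp_le_mul_rpow e hc hrs hK)
  simpa using (ENNReal.le_div_iff_mul_le (.inl (mod_cast hs.ne'))
    (.inl ENNReal.coe_ne_top)).1 one_le_div

end HausdorffDimension

theorem mul_rpow_log_div_log_inv {m ρ : ℝ} (hm : 0 < m) (hρ₀ : 0 < ρ) (hρ₁ : ρ < 1) :
    m * ρ ^ (Real.log m / Real.log ρ⁻¹) = 1 := by
  rw [Real.log_inv, div_neg, Real.rpow_neg hρ₀.le, Real.log_div_log,
    Real.rpow_logb hρ₀ hρ₁.ne hm, mul_inv_cancel₀ hm.ne']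

section RadixSum

variable {ι 𝕜 E : Type*} [NormedField 𝕜] [NormedAddCommGroup E] [NormedSpace 𝕜 E]

/-- The point with address `x` in the self-similar set generated by the contractions
`z ↦ d i + r • z`, that is, the expansion in powers of `r` whose `n`-th digit is `d (x n)`. -/
noncomputable def radixSum (r : 𝕜) (d : ι → E) (x : ℕ → ι) : E :=
  ∑' n, r ^ n • d (x n)

variable {r : 𝕜} {d : ι → E} {D δ : ℝ}

section

variable [CompleteSpace E] [Finite ι]

theorem summable_radixSum (hr : ‖r‖ < 1) (d : ι → E) (x : ℕ → ι) :
    Summable fun n ↦ r ^ n • d (x n) := by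
  obtain ⟨B, hB⟩ := (finite_range fun i ↦ ‖d i‖).bddAbove
  refine Summable.of_norm_bounded ((summable_geometric_of_lt_one (norm_nonneg r) hr).mul_right B)
    fun n ↦ ?_
  rw [norm_smul, norm_pow]
  gcongr
  exact hB (mem_range_self (x n))

theorem radixSum_eq_sum_add (hr : ‖r‖ < 1) (d : ι → E) (x : ℕ → ι) (n : ℕ) :
    radixSum r d x =
      ∑ i ∈ Finset.range n, r ^ i • d (x i) + r ^ n • radixSum r d fun i ↦ x (i + n) := by
  have shifted := summable_radixSum hr d fun i ↦ x (i + n)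
  simp only [radixSum, ← (summable_radixSum hr d x).sum_add_tsum_nat_add n, pow_add,
    mul_comm _ (r ^ n), mul_smul, shifted.tsum_const_smul]

theorem dist_radixSum_of_forall_lt_eq (hr : ‖r‖ < 1) (d : ι → E) {x y : ℕ → ι} {n : ℕ}
    (hxy : ∀ i < n, x i = y i) :
    dist (radixSum r d x) (radixSum r d y) = ‖r‖ ^ n *
      dist (radixSum r d fun i ↦ x (i + n)) (radixSum r d fun i ↦ y (i + n)) := by
  have heads : ∑ i ∈ Finset.range n, r ^ i • d (x i) = ∑ i ∈ Finset.range n, r ^ i • d (y i) :=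
    Finset.sum_congr rfl fun i hi ↦ by rw [hxy i (Finset.mem_range.1 hi)]
  rw [radixSum_eq_sum_add hr d x n, radixSum_eq_sum_add hr d y n, heads, dist_add_left,
    dist_smul₀, norm_pow]

theorem dist_radixSum_le (hr : ‖r‖ < 1) (hD : ∀ i j, dist (d i) (d j) ≤ D) (x y : ℕ → ι) :
    dist (radixSum r d x) (radixSum r d y) ≤ (1 - ‖r‖)⁻¹ * D := by
  rw [dist_eq_norm, radixSum, radixSum,
    ← (summable_radixSum hr d x).tsum_sub (summable_radixSum hr d y)]
  refine tsum_of_norm_bounded ((hasSum_geometric_of_lt_one (norm_nonneg r) hr).mul_right D)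
    fun n ↦ ?_
  rw [← smul_sub, norm_smul, norm_pow, ← dist_eq_norm]
  gcongr
  exact hD _ _

theorem le_dist_radixSum_of_ne (hr : ‖r‖ < 1) (hD : ∀ i j, dist (d i) (d j) ≤ D)
    (hδ : ∀ i j, i ≠ j → δ ≤ dist (d i) (d j)) {x y : ℕ → ι} (hxy : x 0 ≠ y 0) :
    δ - ‖r‖ * ((1 - ‖r‖)⁻¹ * D) ≤ dist (radixSum r d x) (radixSum r d y) := by
  have split (z : ℕ → ι) : radixSum r d z = d (z 0) + r • radixSum r d fun i ↦ z (i + 1) := by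
    simpa using radixSum_eq_sum_add hr d z 1
  set x' := radixSum r d fun i ↦ x (i + 1)
  set y' := radixSum r d fun i ↦ y (i + 1)
  have tails : dist (r • x') (r • y') ≤ ‖r‖ * ((1 - ‖r‖)⁻¹ * D) := by
    rw [dist_smul₀]
    gcongr
    exact dist_radixSum_le hr hD _ _
  have triangle : dist (d (x 0)) (d (y 0)) ≤
      dist (radixSum r d x) (radixSum r d y) + dist (r • x') (r • y') := by
    rw [split x, split y]
    simpa using dist_sub_sub_le (d (x 0) + r • x') (r • x') (d (y 0) + r • y') (r • y')
  linarith [hδ _ _ hxy]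

end

theorem dimH_range_radixSum [CompleteSpace E] [Fintype ι] [Nontrivial ι] (hr₀ : r ≠ 0)
    (hr₁ : ‖r‖ < 1) (hD : ∀ i j, dist (d i) (d j) ≤ D) (hδ : ∀ i j, i ≠ j → δ ≤ dist (d i) (d j))
    (hsep : ‖r‖ * D < (1 - ‖r‖) * δ) :
    dimH (range (radixSum r d)) =
      ENNReal.ofReal (Real.log (Fintype.card ι) / Real.log ‖r‖⁻¹) := by
  set s : ℝ≥0 := (Real.log (Fintype.card ι) / Real.log ‖r‖⁻¹).toNNReal with hs
  have norm_pos : 0 < ‖r‖ := norm_pos_iff.2 hr₀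
  have card_mul_rpow : Fintype.card ι * ‖r‖₊ ^ (s : ℝ) = 1 := by
    have exponent_nonneg : 0 ≤ Real.log (Fintype.card ι) / Real.log ‖r‖⁻¹ :=
      div_nonneg (Real.log_natCast_nonneg _)
        (Real.log_nonneg ((one_le_inv₀ norm_pos).2 hr₁.le))
    rw [← NNReal.coe_inj, hs, Real.coe_toNNReal _ exponent_nonneg]
    exact mul_rpow_log_div_log_inv (Nat.cast_pos.2 Fintype.card_pos) norm_pos hr₁
  have sep_pos : 0 < δ - ‖r‖ * ((1 - ‖r‖)⁻¹ * D) := by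
    rw [mul_left_comm, sub_pos, inv_mul_lt_iff₀ (sub_pos.2 hr₁)]
    exact hsep
  have dist_eq (x y : ℕ → ι) : dist (radixSum r d x) (radixSum r d y) =
      ‖r‖ ^ PiNat.firstDiff x y * dist (radixSum r d fun i ↦ x (i + PiNat.firstDiff x y))
        (radixSum r d fun i ↦ y (i + PiNat.firstDiff x y)) :=
    dist_radixSum_of_forall_lt_eq hr₁ d fun _ hi ↦ PiNat.apply_eq_of_lt_firstDiff hi
  have coe_mul_pow (a : ℝ) (n : ℕ) :
      (a.toNNReal * ‖r‖₊ ^ n : ℝ≥0∞) = ENNReal.ofReal (‖r‖ ^ n * a) := by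
    rw [mul_comm, ENNReal.ofReal_mul (by positivity), ENNReal.ofReal_pow norm_pos.le, ofReal_norm,
      enorm_eq_nnnorm, ENNReal.ofReal]
  apply le_antisymm
  · refine dimH_range_le_of_edist_le_pow_firstDiff (C := ((1 - ‖r‖)⁻¹ * D).toNNReal) hr₁
      card_mul_rpow.le fun x y _ ↦ ?_
    rw [edist_dist, dist_eq, coe_mul_pow]
    gcongr
    exact dist_radixSum_le hr₁ hD _ _
  · refine le_dimH_range_of_pow_firstDiff_le_edist (Real.toNNReal_pos.2 sep_pos).ne'
      card_mul_rpow.ge fun x y hxy ↦ ?_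
    rw [edist_dist, dist_eq, coe_mul_pow]
    gcongr
    refine le_dist_radixSum_of_ne hr₁ hD hδ ?_
    simpa only [zero_add] using PiNat.apply_firstDiff_ne hxy

end RadixSum

theorem genCantorSet_eq_range_radixSum (γ : ℝ) :
    genCantorSet γ = range (radixSum ((1 - γ) / 2) fun i : Bool ↦ cond i ((1 + γ) / 2) 0) := by
  ext t
  simp only [genCantorSet, radixSum, smul_eq_mul, mem_ofPred_eq, mem_range]
  constructor
  · rintro ⟨d, hd, rfl⟩
    have digit (i : ℕ) : ∃ j : Bool, cond j ((1 + γ) / 2) 0 = d i :=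
      (hd i).elim (fun h ↦ ⟨false, h.symm⟩) fun h ↦ ⟨true, h.symm⟩
    choose x hx using digit
    exact ⟨x, by simp only [hx, mul_comm]⟩
  · rintro ⟨x, rfl⟩
    refine ⟨fun i ↦ cond (x i) ((1 + γ) / 2) 0, fun i ↦ ?_, by simp only [mul_comm]⟩
    cases h : x i <;> simp [h]

/-- For every `γ ∈ (0,1)`, the Hausdorff dimension of the generalized
Cantor set `C_γ` equals `log 2 / log (2/(1−γ))`. -/
theorem dimH_genCantorSet (γ : ℝ) (hγ : γ ∈ Set.Ioo (0 : ℝ) 1) :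
    dimH (genCantorSet γ) = ENNReal.ofReal (Real.log 2 / Real.log (2 / (1 - γ))) := by
  obtain ⟨hγ₀, hγ₁⟩ := hγ
  have ratio_pos : 0 < (1 - γ) / 2 := by linarith
  have norm_ratio : ‖(1 - γ) / 2‖ = (1 - γ) / 2 := Real.norm_of_nonneg ratio_pos.le
  have dist_digits (i j : Bool) : dist (cond i ((1 + γ) / 2) 0) (cond j ((1 + γ) / 2) 0) =
      if i = j then 0 else (1 + γ) / 2 := by
    cases i <;> cases j <;> simp [abs_of_pos, show 0 < 1 + γ by linarith]
  rw [genCantorSet_eq_range_radixSum, dimH_range_radixSum (D := (1 + γ) / 2) (δ := (1 + γ) / 2)]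
  · rw [norm_ratio, inv_div, Fintype.card_bool, Nat.cast_ofNat]
  · exact ratio_pos.ne'
  · linarith
  · intro i j
    rw [dist_digits]
    split_ifs <;> linarith
  · intro i j hij
    rw [dist_digits, if_neg hij]
  · rw [norm_ratio]
    exact mul_lt_mul_of_pos_right (by linarith) (by linarith)
end

section
/- For every γ ∈ (0,1), let N_l denote the number of dyadic intervals [j·2^{-l}, (j+1)·2^{-l}] (0 ≤ j < 2^l) whose intersection with the generalized Cantor set C_γ is nonempty. Then lim_{l→∞} log₂(N_l)/l = log 2 / log(2/(1−γ)); i.e., the occupancy (box-counting dimension) of C_γ exists and equals its Hausdorff dimension. -/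
open Filter

/-!
With `b = (1 - γ) / 2`, the set `C_γ` is the disjoint union of its images under `x ↦ b x` and
`x ↦ (1 - b) + b x`. After `k` steps it is covered by `2 ^ k` intervals of length `b ^ k` with
pairwise disjoint interiors, whose left endpoints lie in `C_γ` and are at least `b ^ k` apart.
A mesh of size at least `b ^ k` therefore has at most `3 * 2 ^ k` occupied cells, and a mesh of size
at most `b ^ k` has at least `2 ^ k`. Choosing `k` to be `l * log 2 / log (1 / b)`, rounded up and
down respectively, gives `log₂ N_l = l * log 2 / log (1 / b) + O(1)`.
-/

section Mesh

variable {S : Set ℝ} {m : ℕ} {r : ℝ}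

/-- The cells of the mesh of size `1 / m` in `[0, 1]` that meet `S`, each cell
`[j / m, (j + 1) / m]` being represented by its index `j < m`. Dyadic intervals of level `l` are
the case `m = 2 ^ l`. -/
def occupiedCells (S : Set ℝ) (m : ℕ) : Set ℕ :=
  {j | j < m ∧ (Set.Icc ((j : ℝ) / m) (((j : ℝ) + 1) / m) ∩ S).Nonempty}

lemma mem_occupiedCells {j : ℕ} :
    j ∈ occupiedCells S m ↔ j < m ∧ ∃ x ∈ S, j ≤ m * x ∧ m * x ≤ j + 1 := by
  refine and_congr_right fun hj ↦ ?_
  have hm : (0 : ℝ) < m := by exact_mod_cast (Nat.zero_le j).trans_lt hj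
  simp only [Set.Nonempty, Set.mem_inter_iff, Set.mem_Icc, div_le_iff₀' hm, le_div_iff₀' hm,
    and_comm]

lemma finite_occupiedCells (S : Set ℝ) (m : ℕ) : (occupiedCells S m).Finite :=
  (Set.finite_Iio m).subset fun _ hj ↦ hj.1

lemma ncard_occupiedCells_le_of_cover {A : Finset ℝ}
    (hA : ∀ x ∈ S, ∃ p ∈ A, x ∈ Set.Icc p (p + r)) (hr : m * r ≤ 1) :
    (occupiedCells S m).ncard ≤ 3 * A.card := by
  let nearby (p : ℝ) : Finset ℕ := Finset.Icc (⌊m * p⌋₊ - 1) (⌊m * p⌋₊ + 1)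
  have hsub : occupiedCells S m ⊆ A.biUnion nearby := by
    intro j hj
    obtain ⟨-, x, hx, hjx, hxj⟩ := mem_occupiedCells.1 hj
    obtain ⟨p, hp, hpx, hxp⟩ := hA x hx
    have hpx' : m * p ≤ m * x := by gcongr
    have hxp' : m * x ≤ m * (p + r) := by gcongr
    have hlower : ⌊m * p⌋₊ ≤ j + 1 := Nat.floor_le_of_le (by push_cast; linarith)
    have hupper : j < ⌊m * p⌋₊ + 2 := by
      have := Nat.lt_floor_add_one (m * p)
      rify
      linarith
    simp only [nearby, Finset.coe_biUnion, Set.mem_iUnion, Finset.coe_Icc, Set.mem_Icc]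
    exact ⟨p, hp, by omega, by omega⟩
  calc (occupiedCells S m).ncard
    _ ≤ (A.biUnion nearby).card := by
      simpa only [Set.ncard_coe_finset] using Set.ncard_le_ncard hsub (Finset.finite_toSet _)
    _ ≤ A.card * 3 := Finset.card_biUnion_le_card_mul _ _ _ fun p _ ↦ by
      rw [Nat.card_Icc]; omega
    _ = 3 * A.card := mul_comm _ _

lemma card_le_ncard_occupiedCells_of_separated {A : Finset ℝ} (hAS : ↑A ⊆ S)
    (hA : ∀ p ∈ A, p ∈ Set.Ico 0 1) (hsep : (A : Set ℝ).Pairwise fun p q ↦ r ≤ |p - q|)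
    (hr : 1 ≤ m * r) : A.card ≤ (occupiedCells S m).ncard := by
  have hm : (0 : ℝ) < m := by
    refine (Nat.cast_nonneg m).lt_of_ne' fun h ↦ ?_
    rw [h, zero_mul] at hr
    linarith
  have hmem : ∀ p ∈ A, ⌊m * p⌋₊ ∈ occupiedCells S m := by
    intro p hp
    have hmp : 0 ≤ m * p := mul_nonneg hm.le (hA p hp).1
    refine mem_occupiedCells.2
      ⟨?_, p, hAS hp, Nat.floor_le hmp, (Nat.lt_floor_add_one _).le⟩
    rw [Nat.floor_lt hmp]
    exact mul_lt_of_lt_one_right hm (hA p hp).2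
  have hinj : Set.InjOn (fun p : ℝ ↦ ⌊m * p⌋₊) A := by
    intro p hp q hq hpq
    by_contra hne
    have hfloor : ⌊m * p⌋ = ⌊m * q⌋ := by
      rw [← Int.natCast_floor_eq_floor (mul_nonneg hm.le (hA p hp).1),
        ← Int.natCast_floor_eq_floor (mul_nonneg hm.le (hA q hq).1)]
      exact congrArg _ hpq
    have hclose : m * |p - q| < 1 := by
      simpa only [← mul_sub, abs_mul, Nat.abs_cast] using
        Int.abs_sub_lt_one_of_floor_eq_floor hfloor
    have hfar : m * r ≤ m * |p - q| := by gcongr; exact hsep hp hq hne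
    linarith
  simpa only [Set.ncard_coe_finset] using
    Set.ncard_le_ncard_of_injOn _ hmem hinj (finite_occupiedCells S m)

end Mesh

section Endpoints

variable {b : ℝ} {k : ℕ}

/-- The left endpoints of the `2 ^ k` intervals of length `b ^ k` at the `k`-th step of the
construction of the Cantor set with contraction ratio `b`, obtained by prepending a digit
`c ∈ {0, 1 - b}` to the endpoints of the previous step. -/
noncomputable def cantorEndpoints (b : ℝ) : ℕ → Finset ℝ
  | 0 => {0}
  | k + 1 => Finset.image₂ (fun c p ↦ c + b * p) {0, 1 - b} (cantorEndpoints b k)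

lemma mem_cantorEndpoints_succ {x : ℝ} :
    x ∈ cantorEndpoints b (k + 1) ↔
      ∃ c ∈ ({0, 1 - b} : Finset ℝ), ∃ p ∈ cantorEndpoints b k, c + b * p = x :=
  Finset.mem_image₂

lemma cantorEndpoints_subset_Icc (hb₀ : 0 ≤ b) (hb₁ : b ≤ 1) (k : ℕ) :
    ∀ p ∈ cantorEndpoints b k, p ∈ Set.Icc 0 (1 - b ^ k) := by
  induction k with
  | zero => simp [cantorEndpoints]
  | succ k ih =>
    intro x hx
    obtain ⟨c, hc, p, hp, rfl⟩ := mem_cantorEndpoints_succ.1 hx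
    have hp₀ : 0 ≤ b * p := mul_nonneg hb₀ (ih p hp).1
    have hp₁ : b * p ≤ b * (1 - b ^ k) := by gcongr; exact (ih p hp).2
    rw [Set.mem_Icc, pow_succ']
    simp only [Finset.mem_insert, Finset.mem_singleton] at hc
    rcases hc with rfl | rfl <;> constructor <;> linarith

lemma pow_succ_le_abs_sub_of_digit_ne (hb₀ : 0 ≤ b) (hb₂ : b ≤ 1 / 2) {c c' p q : ℝ}
    (hc : c ∈ ({0, 1 - b} : Finset ℝ)) (hc' : c' ∈ ({0, 1 - b} : Finset ℝ)) (hne : c ≠ c')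
    (hp : p ∈ cantorEndpoints b k) (hq : q ∈ cantorEndpoints b k) :
    b ^ (k + 1) ≤ |c + b * p - (c' + b * q)| := by
  have hmul : ∀ x ∈ cantorEndpoints b k, 0 ≤ b * x ∧ b * x ≤ b - b ^ (k + 1) := by
    intro x hx
    have hx' := cantorEndpoints_subset_Icc hb₀ (by linarith) k x hx
    refine ⟨mul_nonneg hb₀ hx'.1, ?_⟩
    calc b * x ≤ b * (1 - b ^ k) := by gcongr; exact hx'.2
      _ = b - b ^ (k + 1) := by ring
  have hbp := hmul p hp
  have hbq := hmul q hq
  simp only [Finset.mem_insert, Finset.mem_singleton] at hc hc'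
  rw [le_abs']
  rcases hc with rfl | rfl <;> rcases hc' with rfl | rfl
  · exact absurd rfl hne
  · left; linarith
  · right; linarith
  · exact absurd rfl hne

lemma pairwise_pow_le_abs_sub_cantorEndpoints (hb₀ : 0 ≤ b) (hb₂ : b ≤ 1 / 2) (k : ℕ) :
    (cantorEndpoints b k : Set ℝ).Pairwise fun p q ↦ b ^ k ≤ |p - q| := by
  induction k with
  | zero => simp [cantorEndpoints]
  | succ k ih =>
    intro x hx y hy hxy
    obtain ⟨c, hc, p, hp, rfl⟩ := mem_cantorEndpoints_succ.1 hx
    obtain ⟨c', hc', q, hq, rfl⟩ := mem_cantorEndpoints_succ.1 hy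
    obtain rfl | hne := eq_or_ne c c'
    · have hpq : p ≠ q := by rintro rfl; exact hxy rfl
      rw [add_sub_add_left_eq_sub, ← mul_sub, abs_mul, abs_of_nonneg hb₀, pow_succ']
      gcongr
      exact ih hp hq hpq
    · exact pow_succ_le_abs_sub_of_digit_ne hb₀ hb₂ hc hc' hne hp hq

lemma card_cantorEndpoints (hb₀ : 0 < b) (hb₂ : b ≤ 1 / 2) (k : ℕ) :
    (cantorEndpoints b k).card = 2 ^ k := by
  induction k with
  | zero => simp [cantorEndpoints]
  | succ k ih =>
    have hdigits : ({0, 1 - b} : Finset ℝ).card = 2 := Finset.card_pair (by linarith)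
    rw [cantorEndpoints, Finset.card_image₂_iff.2, hdigits, ih, pow_succ']
    rintro ⟨c, p⟩ ⟨hc, hp⟩ ⟨c', q⟩ ⟨hc', hq⟩ (h : c + b * p = c' + b * q)
    obtain rfl | hne := eq_or_ne c c'
    · simpa [hb₀.ne'] using h
    · have hgap := pow_succ_le_abs_sub_of_digit_ne hb₀.le hb₂ hc hc' hne hp hq
      rw [h, sub_self, abs_zero] at hgap
      exact absurd hgap (pow_pos hb₀ _).not_ge

lemma cantorEndpoints_subset {S : Set ℝ} (h₀ : 0 ∈ S)
    (hS : Set.image2 (fun c y ↦ c + b * y) {0, 1 - b} S ⊆ S) (k : ℕ) :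
    ↑(cantorEndpoints b k) ⊆ S := by
  induction k with
  | zero => simpa [cantorEndpoints] using h₀
  | succ k ih =>
    rw [cantorEndpoints, Finset.coe_image₂, Finset.coe_pair]
    exact (Set.image2_subset_left ih).trans hS

lemma exists_cantorEndpoints_mem_Icc {S : Set ℝ} (hb₀ : 0 ≤ b) (hS₁ : S ⊆ Set.Icc 0 1)
    (hS : S ⊆ Set.image2 (fun c y ↦ c + b * y) {0, 1 - b} S) (k : ℕ) :
    ∀ x ∈ S, ∃ p ∈ cantorEndpoints b k, x ∈ Set.Icc p (p + b ^ k) := by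
  induction k with
  | zero => simpa [cantorEndpoints, Set.subset_def] using hS₁
  | succ k ih =>
    intro x hx
    obtain ⟨c, hc, y, hy, rfl⟩ := hS hx
    obtain ⟨p, hp, hpy, hyp⟩ := ih y hy
    refine ⟨c + b * p, mem_cantorEndpoints_succ.2 ⟨c, by simpa using hc, p, hp, rfl⟩, ?_, ?_⟩
    · dsimp only
      gcongr
    · calc c + b * y ≤ c + b * (p + b ^ k) := by gcongr
        _ = c + b * p + b ^ (k + 1) := by ring

end Endpoints

section GenCantorSet

variable {γ : ℝ}

lemma summable_digit_mul_pow {a r : ℝ} {d : ℕ → ℝ} (hr : |r| < 1)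
    (hd : ∀ i, d i = 0 ∨ d i = a) : Summable fun i ↦ d i * r ^ i := by
  refine Summable.of_norm_bounded ((summable_geometric_of_lt_one (abs_nonneg r) hr).mul_left |a|)
    fun i ↦ ?_
  rw [Real.norm_eq_abs, abs_mul, abs_pow]
  refine mul_le_mul_of_nonneg_right ?_ (by positivity)
  rcases hd i with h | h <;> simp [h]

lemma zero_mem_genCantorSet (γ : ℝ) : 0 ∈ genCantorSet γ :=
  ⟨fun _ ↦ 0, fun _ ↦ .inl rfl, by simp⟩

lemma genCantorSet_subset_Icc (hγ : γ ∈ Set.Ioc (-1) 1) : genCantorSet γ ⊆ Set.Icc 0 1 := by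
  rintro _ ⟨d, hd, rfl⟩
  obtain ⟨hγ₀, hγ₁⟩ := hγ
  have hb₀ : 0 ≤ (1 - γ) / 2 := by linarith
  have hb₁ : (1 - γ) / 2 < 1 := by linarith
  have hdigit : ∀ i, 0 ≤ d i ∧ d i ≤ (1 + γ) / 2 := by
    intro i
    rcases hd i with h | h <;> constructor <;> linarith
  have hmax : HasSum (fun i ↦ (1 + γ) / 2 * ((1 - γ) / 2) ^ i) 1 := by
    have hsum : (1 + γ) / 2 * (1 - (1 - γ) / 2)⁻¹ = 1 := by
      rw [show 1 - (1 - γ) / 2 = (1 + γ) / 2 by ring]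
      exact mul_inv_cancel₀ (by linarith)
    simpa only [hsum] using (hasSum_geometric_of_lt_one hb₀ hb₁).mul_left ((1 + γ) / 2)
  refine ⟨tsum_nonneg fun i ↦ mul_nonneg (hdigit i).1 (pow_nonneg hb₀ i), ?_⟩
  refine hasSum_le (fun i ↦ ?_)
    (summable_digit_mul_pow (abs_lt.2 ⟨by linarith, hb₁⟩) hd).hasSum hmax
  gcongr
  exact (hdigit i).2

lemma image2_genCantorSet (hγ : |(1 - γ) / 2| < 1) :
    Set.image2 (fun c y ↦ c + (1 - γ) / 2 * y) {0, 1 - (1 - γ) / 2} (genCantorSet γ) =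
      genCantorSet γ := by
  have hsplit {d : ℕ → ℝ} (hd : ∀ i, d i = 0 ∨ d i = (1 + γ) / 2) :
      ∑' i, d i * ((1 - γ) / 2) ^ i =
        d 0 + (1 - γ) / 2 * ∑' i, d (i + 1) * ((1 - γ) / 2) ^ i := by
    rw [(summable_digit_mul_pow hγ hd).tsum_eq_zero_add, ← tsum_mul_left, pow_zero, mul_one]
    congr! 3
    ring
  rw [show 1 - (1 - γ) / 2 = (1 + γ) / 2 by ring]
  refine Set.Subset.antisymm ?_ ?_
  · rintro _ ⟨c, hc, _, ⟨d, hd, rfl⟩, rfl⟩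
    let d' : ℕ → ℝ := fun i ↦ Nat.casesOn i c d
    have hd' : ∀ i, d' i = 0 ∨ d' i = (1 + γ) / 2 := by
      rintro (_ | i)
      exacts [hc, hd i]
    exact ⟨d', hd', (hsplit hd').symm⟩
  · rintro _ ⟨d, hd, rfl⟩
    exact ⟨d 0, hd 0, _, ⟨fun i ↦ d (i + 1), fun i ↦ hd (i + 1), rfl⟩, (hsplit hd).symm⟩

variable {m k : ℕ}

lemma two_pow_le_ncard_occupiedCells_genCantorSet (hγ : γ ∈ Set.Ico 0 1)
    (hm : 1 ≤ m * ((1 - γ) / 2) ^ k) : 2 ^ k ≤ (occupiedCells (genCantorSet γ) m).ncard := by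
  obtain ⟨hγ₀, hγ₁⟩ := hγ
  have hb₀ : 0 < (1 - γ) / 2 := by linarith
  have hb₂ : (1 - γ) / 2 ≤ 1 / 2 := by linarith
  have hS := image2_genCantorSet (abs_lt.2 ⟨by linarith, by linarith⟩ : |(1 - γ) / 2| < 1)
  rw [← card_cantorEndpoints hb₀ hb₂ k]
  refine card_le_ncard_occupiedCells_of_separated
    (cantorEndpoints_subset (zero_mem_genCantorSet γ) hS.subset k) (fun p hp ↦ ?_)
    (pairwise_pow_le_abs_sub_cantorEndpoints hb₀.le hb₂ k) hm
  have hp' := cantorEndpoints_subset_Icc hb₀.le (by linarith) k p hp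
  exact ⟨hp'.1, hp'.2.trans_lt (sub_lt_self 1 (pow_pos hb₀ k))⟩

lemma ncard_occupiedCells_genCantorSet_le (hγ : γ ∈ Set.Ico 0 1)
    (hm : m * ((1 - γ) / 2) ^ k ≤ 1) :
    (occupiedCells (genCantorSet γ) m).ncard ≤ 3 * 2 ^ k := by
  obtain ⟨hγ₀, hγ₁⟩ := hγ
  have hb₀ : 0 < (1 - γ) / 2 := by linarith
  have hS := image2_genCantorSet (abs_lt.2 ⟨by linarith, by linarith⟩ : |(1 - γ) / 2| < 1)
  rw [← card_cantorEndpoints hb₀ (by linarith) k]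
  exact ncard_occupiedCells_le_of_cover (exists_cantorEndpoints_mem_Icc hb₀.le
    (genCantorSet_subset_Icc ⟨by linarith, hγ₁.le⟩) hS.superset k) hm

end GenCantorSet

section Growth

variable {a ρ x y : ℝ}

lemma logb_sub_one_le_logb_of_pow_le (ha : 1 < a) (hρ : 1 < ρ) (hx : 1 ≤ x)
    (h : ∀ k : ℕ, ρ ^ k ≤ x → a ^ k ≤ y) : Real.logb ρ x - 1 ≤ Real.logb a y := by
  set k := ⌊Real.logb ρ x⌋₊
  have hρk : ρ ^ k ≤ x := by
    rw [← Real.rpow_natCast, ← Real.le_logb_iff_rpow_le hρ (by linarith)]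
    exact Nat.floor_le (Real.logb_nonneg hρ hx)
  have hak : a ^ k ≤ y := h k hρk
  calc Real.logb ρ x - 1
    _ ≤ k := (Nat.sub_one_lt_floor _).le
    _ ≤ Real.logb a y := by
      rwa [Real.le_logb_iff_rpow_le ha ((pow_pos (by linarith) k).trans_le hak),
        Real.rpow_natCast]

lemma logb_le_logb_add_one_of_le_pow {C : ℝ} (ha : 1 < a) (hρ : 1 < ρ) (hx : 1 ≤ x) (hy : 0 < y)
    (h : ∀ k : ℕ, x ≤ ρ ^ k → y ≤ C * a ^ k) :
    Real.logb a y ≤ Real.logb ρ x + 1 + Real.logb a C := by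
  set k := ⌈Real.logb ρ x⌉₊
  have hρk : x ≤ ρ ^ k := by
    rw [← Real.rpow_natCast, ← Real.logb_le_iff_le_rpow hρ (by linarith)]
    exact Nat.le_ceil _
  have hak : 0 < a ^ k := pow_pos (by linarith) k
  have hyk : y ≤ C * a ^ k := h k hρk
  have hC : 0 < C := pos_of_mul_pos_left (hy.trans_le hyk) hak.le
  calc Real.logb a y
    _ ≤ Real.logb a (C * a ^ k) := Real.logb_le_logb_of_le ha hy hyk
    _ = k + Real.logb a C := by
      rw [Real.logb_mul hC.ne' hak.ne', Real.logb_pow, Real.logb_self_eq_one ha, mul_one, add_comm]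
    _ ≤ Real.logb ρ x + 1 + Real.logb a C := by
      gcongr
      exact (Nat.ceil_lt_add_one (Real.logb_nonneg hρ hx)).le

lemma tendsto_div_natCast_of_abs_sub_mul_le {u : ℕ → ℝ} {D K : ℝ}
    (h : ∀ n : ℕ, |u n - n * D| ≤ K) : Tendsto (fun n : ℕ ↦ u n / n) atTop (nhds D) := by
  rw [tendsto_iff_dist_tendsto_zero]
  refine squeeze_zero' (.of_forall fun _ ↦ dist_nonneg) ?_
    (tendsto_const_div_atTop_nhds_zero_nat K)
  filter_upwards [eventually_gt_atTop 0] with n hn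
  have hn' : (0 : ℝ) < n := by exact_mod_cast hn
  rw [Real.dist_eq, div_sub' hn'.ne', abs_div, Nat.abs_cast]
  gcongr
  exact h n

end Growth

lemma abs_logb_ncard_occupiedCells_genCantorSet_sub_le {γ : ℝ} (hγ : γ ∈ Set.Ico 0 1) {m : ℕ}
    (hm : 1 ≤ m) :
    |Real.logb 2 (occupiedCells (genCantorSet γ) m).ncard - Real.logb (2 / (1 - γ)) m| ≤
      1 + Real.logb 2 3 := by
  have hγ' : 0 < 1 - γ := sub_pos.2 hγ.2
  have hρ : 1 < 2 / (1 - γ) := by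
    rw [one_lt_div hγ']
    linarith [hγ.1]
  have hm' : (1 : ℝ) ≤ m := by exact_mod_cast hm
  have hpow (k : ℕ) : ((1 - γ) / 2) ^ k = ((2 / (1 - γ)) ^ k)⁻¹ := by rw [← inv_pow, inv_div]
  have hpos (k : ℕ) : 0 < (2 / (1 - γ)) ^ k := by positivity
  have hlower (k : ℕ) (hk : (2 / (1 - γ)) ^ k ≤ m) :
      (2 : ℝ) ^ k ≤ (occupiedCells (genCantorSet γ) m).ncard := by
    refine mod_cast two_pow_le_ncard_occupiedCells_genCantorSet hγ ?_
    rwa [hpow, ← div_eq_mul_inv, one_le_div (hpos k)]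
  have hupper (k : ℕ) (hk : m ≤ (2 / (1 - γ)) ^ k) :
      ((occupiedCells (genCantorSet γ) m).ncard : ℝ) ≤ 3 * 2 ^ k := by
    refine mod_cast ncard_occupiedCells_genCantorSet_le hγ ?_
    rwa [hpow, ← div_eq_mul_inv, div_le_one (hpos k)]
  have hncard : (0 : ℝ) < (occupiedCells (genCantorSet γ) m).ncard :=
    one_pos.trans_le (by simpa only [pow_zero] using hlower 0 (by simpa only [pow_zero] using hm'))
  have h₁ := logb_sub_one_le_logb_of_pow_le one_lt_two hρ hm' hlower
  have h₂ := logb_le_logb_add_one_of_le_pow one_lt_two hρ hm' hncard hupper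
  have h₃ : 0 ≤ Real.logb 2 3 := Real.logb_nonneg one_lt_two (by norm_num)
  rw [abs_le]
  constructor <;> linarith

/-- For `γ ∈ (0,1)`, let `N l` be the number of dyadic intervals
`[j·2^{-l}, (j+1)·2^{-l}]` (`0 ≤ j < 2^l`) meeting the generalized Cantor set `C_γ`.
Then `log₂(N l)/l → log 2 / log (2/(1−γ))` as `l → ∞`: the occupancy (box-counting
dimension) of `C_γ` exists and equals its Hausdorff dimension. -/
theorem genCantorSet_box_dimension (γ : ℝ) (hγ : γ ∈ Set.Ioo (0 : ℝ) 1)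
    (N : ℕ → ℕ)
    (hN : ∀ l, N l = {j : ℕ | j < 2 ^ l ∧
      (Set.Icc ((j : ℝ) / 2 ^ l) (((j : ℝ) + 1) / 2 ^ l) ∩ genCantorSet γ).Nonempty}.ncard) :
    Tendsto (fun l : ℕ => Real.logb 2 (N l) / l) atTop
      (nhds (Real.log 2 / Real.log (2 / (1 - γ)))) := by
  have hcells (l : ℕ) : N l = (occupiedCells (genCantorSet γ) (2 ^ l)).ncard := by
    simpa only [occupiedCells, Nat.cast_pow, Nat.cast_ofNat] using hN l
  have hlogb (l : ℕ) : Real.logb (2 / (1 - γ)) (2 ^ l : ℕ) =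
      l * (Real.log 2 / Real.log (2 / (1 - γ))) := by
    rw [Nat.cast_pow, Nat.cast_ofNat, Real.logb_pow, Real.log_div_log]
  refine tendsto_div_natCast_of_abs_sub_mul_le (K := 1 + Real.logb 2 3) fun l ↦ ?_
  rw [hcells, ← hlogb]
  exact abs_logb_ncard_occupiedCells_genCantorSet_sub_le (Set.Ioo_subset_Ico_self hγ)
    Nat.one_le_two_pow
end

section
/- There exists a nonempty compact set X ⊆ [0,1] such that, letting N_l denote the number of dyadic intervals [j·2^{-l}, (j+1)·2^{-l}] (0 ≤ j < 2^l) whose intersection with X is nonempty, the sequence log₂(N_l)/l does not converge as l → ∞ (i.e., the box-counting dimension of X is not defined). -/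
open Filter

/-!
Let `X` be the compact set of those `x ∈ [0, 1]` which, for every `k`, are at most
`2 ^ (-8 ^ (k + 1))` or are a multiple of `2 ^ (-2 * 8 ^ k)`. At level `l = 2 * 8 ^ k` every
multiple of `2 ^ (-l)` up to `2 ^ (-8 ^ k)` lies in `X`, so at least `2 ^ (l / 2)` intervals meet
`X`. At level `l = 8 ^ (k + 1)` the set `X` lies within the first interval and a set of
`2 ^ (l / 4) + 1` points, each of which meets at most two intervals. Hence `log₂ (N l) / l` is at
least `1 / 2` along one sequence of levels and asymptotically at most `1 / 4` along another.
-/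

open scoped Topology

section GrowthRate

variable {N l m : ℕ → ℕ} {d t : ℝ}

lemma ge_of_tendsto_logb_div_of_two_pow_le
    (hd : Tendsto (fun n => Real.logb 2 (N n) / n) atTop (𝓝 d))
    (hl : Tendsto l atTop atTop) (hN : ∀ k, 2 ^ m k ≤ N (l k))
    (ht : Tendsto (fun k => (m k : ℝ) / l k) atTop (𝓝 t)) : t ≤ d := by
  refine le_of_tendsto_of_tendsto' ht (hd.comp hl) fun k => ?_
  have hlog : (m k : ℝ) ≤ Real.logb 2 (N (l k)) := by
    have hpow : (2 : ℝ) ^ m k ≤ N (l k) := mod_cast hN k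
    rw [Real.le_logb_iff_rpow_le one_lt_two ((pow_pos two_pos _).trans_le hpow), Real.rpow_natCast]
    exact hpow
  exact div_le_div_of_nonneg_right hlog (Nat.cast_nonneg _)

lemma le_of_tendsto_logb_div_of_le_two_pow
    (hd : Tendsto (fun n => Real.logb 2 (N n) / n) atTop (𝓝 d))
    (hl : Tendsto l atTop atTop) (hN : ∀ k, N (l k) ≤ 2 ^ m k)
    (ht : Tendsto (fun k => (m k : ℝ) / l k) atTop (𝓝 t)) : d ≤ t := by
  refine le_of_tendsto_of_tendsto' (hd.comp hl) ht fun k => ?_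
  have hlog : Real.logb 2 (N (l k)) ≤ m k := by
    rcases Nat.eq_zero_or_pos (N (l k)) with hzero | hpos
    · simp [hzero]
    · rw [Real.logb_le_iff_le_rpow one_lt_two (mod_cast hpos), Real.rpow_natCast]
      exact_mod_cast hN k
  exact div_le_div_of_nonneg_right hlog (Nat.cast_nonneg _)

end GrowthRate

/-- The indices `j` of the level-`l` dyadic intervals `[j / 2 ^ l, (j + 1) / 2 ^ l]` in `[0, 1]`
that meet `X`. -/
def dyadicBoxes (X : Set ℝ) (l : ℕ) : Set ℕ :=
  {j : ℕ | j < 2 ^ l ∧ (Set.Icc ((j : ℝ) / 2 ^ l) (((j : ℝ) + 1) / 2 ^ l) ∩ X).Nonempty}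

/-- The number `N_l` of level-`l` dyadic intervals meeting `X`, whose growth rate
`log₂ N_l / l` defines the box-counting dimension. -/
noncomputable def boxCount (X : Set ℝ) (l : ℕ) : ℕ :=
  (dyadicBoxes X l).ncard

section BoxCount

variable {X Y : Set ℝ} {l n : ℕ}

lemma finite_dyadicBoxes (X : Set ℝ) (l : ℕ) : (dyadicBoxes X l).Finite :=
  (Set.finite_lt_nat (2 ^ l)).subset fun _ hj => hj.1

lemma boxCount_mono (h : X ⊆ Y) : boxCount X l ≤ boxCount Y l :=
  Set.ncard_le_ncard (fun _ hj => ⟨hj.1, hj.2.mono (Set.inter_subset_inter_right _ h)⟩)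
    (finite_dyadicBoxes Y l)

lemma dyadicBoxes_union (X Y : Set ℝ) (l : ℕ) :
    dyadicBoxes (X ∪ Y) l = dyadicBoxes X l ∪ dyadicBoxes Y l := by
  ext j
  simp only [dyadicBoxes, Set.inter_union_distrib_left, Set.union_nonempty, Set.mem_union,
    Set.mem_ofPred_eq, and_or_left]

lemma boxCount_union_le (X Y : Set ℝ) (l : ℕ) :
    boxCount (X ∪ Y) l ≤ boxCount X l + boxCount Y l := by
  rw [boxCount, dyadicBoxes_union]
  exact Set.ncard_union_le _ _

lemma mem_dyadicBoxes_of_div_mem {j : ℕ} (hj : j < 2 ^ l) (h : (j : ℝ) / 2 ^ l ∈ X) :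
    j ∈ dyadicBoxes X l :=
  ⟨hj, _, ⟨le_rfl, by gcongr; exact (lt_add_one _).le⟩, h⟩

lemma le_boxCount_of_forall_div_mem (hn : n ≤ 2 ^ l) (h : ∀ j < n, (j : ℝ) / 2 ^ l ∈ X) :
    n ≤ boxCount X l := by
  have hsub : (Finset.range n : Set ℕ) ⊆ dyadicBoxes X l := fun j hj => by
    have hjn : j < n := Finset.mem_range.1 hj
    exact mem_dyadicBoxes_of_div_mem (hjn.trans_le hn) (h j hjn)
  simpa [boxCount] using Set.ncard_le_ncard hsub (finite_dyadicBoxes X l)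

lemma boxCount_Icc_zero_div_le (n l : ℕ) : boxCount (Set.Icc 0 ((n : ℝ) / 2 ^ l)) l ≤ n + 1 := by
  have hsub : dyadicBoxes (Set.Icc 0 ((n : ℝ) / 2 ^ l)) l ⊆ (Finset.range (n + 1) : Set ℕ) := by
    rintro j ⟨-, x, ⟨hjx, -⟩, -, hxn⟩
    have hjn : (j : ℝ) ≤ n := (div_le_div_iff_of_pos_right (by positivity)).1 (hjx.trans hxn)
    exact Finset.mem_range.2 (Nat.lt_succ_of_le (mod_cast hjn))
  simpa [boxCount] using Set.ncard_le_ncard hsub (Finset.finite_toSet _)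

lemma eq_floor_or_eq_floor_sub_one_of_mem_Icc {j : ℕ} {x : ℝ}
    (hx : x ∈ Set.Icc ((j : ℝ) / 2 ^ l) (((j : ℝ) + 1) / 2 ^ l)) :
    j = ⌊x * 2 ^ l⌋₊ ∨ j = ⌊x * 2 ^ l⌋₊ - 1 := by
  have hle : (j : ℝ) ≤ x * 2 ^ l := (div_le_iff₀ (by positivity)).1 hx.1
  have hge : x * 2 ^ l ≤ (j + 1 : ℕ) := by
    exact_mod_cast (le_div_iff₀ (by positivity)).1 hx.2
  have hfloor_ge : j ≤ ⌊x * 2 ^ l⌋₊ := Nat.le_floor hle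
  have hfloor_le : ⌊x * 2 ^ l⌋₊ ≤ j + 1 := Nat.floor_le_of_le hge
  omega

lemma boxCount_le_two_mul_card (S : Finset ℝ) (l : ℕ) : boxCount S l ≤ 2 * S.card := by
  classical
  set left := S.image fun x => ⌊x * 2 ^ l⌋₊ - 1
  set right := S.image fun x => ⌊x * 2 ^ l⌋₊
  have hsub : dyadicBoxes S l ⊆ (right ∪ left : Finset ℕ) := by
    rintro j ⟨-, x, hx, hxS⟩
    rcases eq_floor_or_eq_floor_sub_one_of_mem_Icc hx with h | h
    · exact Finset.mem_union_left _ (Finset.mem_image.2 ⟨x, hxS, h.symm⟩)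
    · exact Finset.mem_union_right _ (Finset.mem_image.2 ⟨x, hxS, h.symm⟩)
  calc boxCount S l ≤ (right ∪ left).card := by
        simpa only [boxCount, Set.ncard_coe_finset] using
          Set.ncard_le_ncard hsub (Finset.finite_toSet _)
    _ ≤ right.card + left.card := Finset.card_union_le _ _
    _ ≤ S.card + S.card := add_le_add Finset.card_image_le Finset.card_image_le
    _ = 2 * S.card := (two_mul _).symm

end BoxCount

/-- The dyadic rationals in `[0, 1]` with denominator `2 ^ b`. -/
noncomputable def dyadicGrid (b : ℕ) : Finset ℝ :=
  (Finset.range (2 ^ b + 1)).image fun i : ℕ => (i : ℝ) / 2 ^ b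

section DyadicGrid

variable {b i : ℕ}

lemma div_mem_dyadicGrid (hi : i ≤ 2 ^ b) : (i : ℝ) / 2 ^ b ∈ dyadicGrid b :=
  Finset.mem_image.2 ⟨i, Finset.mem_range.2 (Nat.lt_succ_of_le hi), rfl⟩

lemma card_dyadicGrid_le (b : ℕ) : (dyadicGrid b).card ≤ 2 ^ b + 1 :=
  Finset.card_image_le.trans (Finset.card_range _).le

lemma dyadicGrid_subset_Icc (b : ℕ) : (dyadicGrid b : Set ℝ) ⊆ Set.Icc 0 1 := by
  intro x hx
  obtain ⟨i, hi, rfl⟩ := Finset.mem_image.1 hx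
  have hle : (i : ℝ) ≤ 2 ^ b := mod_cast Finset.mem_range_succ_iff.1 hi
  exact ⟨by positivity, div_le_one_of_le₀ hle (by positivity)⟩

lemma dyadicGrid_mono : Monotone dyadicGrid := by
  intro b c hbc x hx
  obtain ⟨i, hi, rfl⟩ := Finset.mem_image.1 hx
  obtain ⟨e, rfl⟩ := Nat.exists_eq_add_of_le hbc
  have hrefine : (i : ℝ) / 2 ^ b = (i * 2 ^ e : ℕ) / 2 ^ (b + e) := by
    push_cast
    rw [pow_add, mul_div_mul_right _ _ (by positivity)]
  rw [hrefine]
  apply div_mem_dyadicGrid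
  rw [pow_add]
  exact Nat.mul_le_mul_right _ (Finset.mem_range_succ_iff.1 hi)

end DyadicGrid

/-- The set of points of `[0, 1]` which, for every `k`, are dyadic with denominator `2 ^ p k`
unless they are at most `2 ^ (-q (k + 1))`. When `q k ≤ p k ≤ q (k + 1)`, it is the dyadic grid of
mesh `2 ^ (-p k)` between the scales `2 ^ (-q (k + 1))` and `2 ^ (-q k)`, and so looks large at
level `p k` and small at level `q (k + 1)`. -/
def multiscaleGrid (p q : ℕ → ℕ) : Set ℝ :=
  ⋂ k, (Set.Icc 0 (1 / 2 ^ q (k + 1)) ∪ dyadicGrid (p k))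

section MultiscaleGrid

variable {p q : ℕ → ℕ}

lemma multiscaleGrid_subset_Icc (p q : ℕ → ℕ) : multiscaleGrid p q ⊆ Set.Icc 0 1 :=
  (Set.iInter_subset _ 0).trans <| Set.union_subset
    (Set.Icc_subset_Icc_right <| div_le_one_of_le₀ (one_le_pow₀ one_le_two) (by positivity))
    (dyadicGrid_subset_Icc _)

lemma isCompact_multiscaleGrid (p q : ℕ → ℕ) : IsCompact (multiscaleGrid p q) :=
  isCompact_Icc.of_isClosed_subset
    (isClosed_iInter fun _ => isClosed_Icc.union (Finset.finite_toSet _).isClosed)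
    (multiscaleGrid_subset_Icc p q)

lemma zero_mem_multiscaleGrid (p q : ℕ → ℕ) : 0 ∈ multiscaleGrid p q :=
  Set.mem_iInter.2 fun _ => Or.inl ⟨le_rfl, by positivity⟩

lemma div_mem_multiscaleGrid (hp : Monotone p) (hq : Monotone q) {j k : ℕ} (hj : j ≤ 2 ^ p k)
    (hjq : (j : ℝ) / 2 ^ p k ≤ 1 / 2 ^ q k) : (j : ℝ) / 2 ^ p k ∈ multiscaleGrid p q := by
  refine Set.mem_iInter.2 fun i => ?_
  rcases lt_or_ge i k with hik | hki
  · refine Or.inl ⟨by positivity, hjq.trans ?_⟩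
    exact one_div_le_one_div_of_le (by positivity) (pow_le_pow_right₀ one_le_two (hq hik))
  · exact Or.inr (dyadicGrid_mono (hp hki) (div_mem_dyadicGrid hj))

lemma two_pow_le_boxCount_multiscaleGrid (hp : Monotone p) (hq : Monotone q) {k : ℕ}
    (hqp : q k ≤ p k) : 2 ^ (p k - q k) ≤ boxCount (multiscaleGrid p q) (p k) := by
  have hpow : 2 ^ (p k - q k) ≤ 2 ^ p k := Nat.pow_le_pow_right two_pos (Nat.sub_le _ _)
  refine le_boxCount_of_forall_div_mem hpow fun j hj =>
    div_mem_multiscaleGrid hp hq (hj.le.trans hpow) ?_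
  calc (j : ℝ) / 2 ^ p k ≤ 2 ^ (p k - q k) / 2 ^ p k := by
        gcongr
        exact_mod_cast hj.le
    _ = 1 / 2 ^ q k := by
        rw [div_eq_div_iff (by positivity) (by positivity), one_mul, ← pow_add,
          Nat.sub_add_cancel hqp]

lemma boxCount_multiscaleGrid_le_two_pow (p q : ℕ → ℕ) (k : ℕ) :
    boxCount (multiscaleGrid p q) (q (k + 1)) ≤ 2 ^ (p k + 3) := by
  set l := q (k + 1)
  calc boxCount (multiscaleGrid p q) l
      ≤ boxCount (Set.Icc 0 (1 / 2 ^ l) ∪ dyadicGrid (p k)) l :=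
        boxCount_mono (Set.iInter_subset _ k)
    _ ≤ boxCount (Set.Icc 0 (1 / 2 ^ l)) l + boxCount (dyadicGrid (p k)) l :=
        boxCount_union_le _ _ _
    _ ≤ (1 + 1) + 2 * (dyadicGrid (p k)).card :=
        add_le_add (mod_cast boxCount_Icc_zero_div_le 1 l) (boxCount_le_two_mul_card _ l)
    _ ≤ (1 + 1) + 2 * (2 ^ p k + 1) := by gcongr; exact card_dyadicGrid_le _
    _ ≤ 2 ^ (p k + 3) := by
        have hone : 1 ≤ 2 ^ p k := Nat.one_le_two_pow
        rw [pow_add]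
        omega

variable {d r s : ℝ}

lemma one_sub_le_of_tendsto_logb_boxCount_multiscaleGrid (hp : Monotone p) (hq : Monotone q)
    (hqp : ∀ k, q k ≤ p k) (hp_top : Tendsto p atTop atTop)
    (hr : Tendsto (fun k => (q k : ℝ) / p k) atTop (𝓝 r))
    (hd : Tendsto (fun l : ℕ => Real.logb 2 (boxCount (multiscaleGrid p q) l) / l) atTop (𝓝 d)) :
    1 - r ≤ d := by
  refine ge_of_tendsto_logb_div_of_two_pow_le hd hp_top
    (fun k => two_pow_le_boxCount_multiscaleGrid hp hq (hqp k)) ?_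
  refine (hr.const_sub 1).congr' ?_
  filter_upwards [hp_top.eventually_gt_atTop 0] with k hk
  rw [Nat.cast_sub (hqp k), sub_div, div_self (by positivity)]

lemma le_of_tendsto_logb_boxCount_multiscaleGrid (hq_top : Tendsto q atTop atTop)
    (hs : Tendsto (fun k => (p k : ℝ) / q (k + 1)) atTop (𝓝 s))
    (hd : Tendsto (fun l : ℕ => Real.logb 2 (boxCount (multiscaleGrid p q) l) / l) atTop (𝓝 d)) :
    d ≤ s := by
  have hlevel : Tendsto (fun k => q (k + 1)) atTop atTop := hq_top.comp (tendsto_add_atTop_nat 1)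
  refine le_of_tendsto_logb_div_of_le_two_pow hd hlevel (boxCount_multiscaleGrid_le_two_pow p q) ?_
  have hvanish : Tendsto (fun k => (3 : ℝ) / q (k + 1)) atTop (𝓝 0) :=
    (tendsto_const_div_atTop_nhds_zero_nat 3).comp hlevel
  simpa [add_div] using hs.add hvanish

end MultiscaleGrid

/-- There exists a nonempty compact set `X ⊆ [0,1]` such that, with
`N l` the number of dyadic intervals `[j·2^{-l}, (j+1)·2^{-l}]` (`0 ≤ j < 2^l`) meeting
`X`, the sequence `log₂(N l)/l` does not converge as `l → ∞`; i.e., the box-counting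
dimension of `X` is not defined. -/
theorem exists_compact_without_box_dimension :
    ∃ X : Set ℝ, X.Nonempty ∧ IsCompact X ∧ X ⊆ Set.Icc 0 1 ∧
      ¬ ∃ d : ℝ, Tendsto (fun l : ℕ =>
          Real.logb 2 (({j : ℕ | j < 2 ^ l ∧
            (Set.Icc ((j : ℝ) / 2 ^ l) (((j : ℝ) + 1) / 2 ^ l) ∩ X).Nonempty}.ncard : ℝ)) / l)
        atTop (nhds d) := by
  set q : ℕ → ℕ := fun k => 8 ^ k
  set p : ℕ → ℕ := fun k => 2 * q k
  have hq : StrictMono q := pow_right_strictMono₀ (by norm_num)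
  have hp : StrictMono p := hq.const_mul two_pos
  refine ⟨multiscaleGrid p q, ⟨0, zero_mem_multiscaleGrid p q⟩, isCompact_multiscaleGrid p q,
    multiscaleGrid_subset_Icc p q, ?_⟩
  rintro ⟨d, hd⟩
  have hr : Tendsto (fun k => (q k : ℝ) / p k) atTop (𝓝 (1 / 2)) :=
    tendsto_const_nhds.congr fun k => by push_cast [p, q]; field_simp
  have hs : Tendsto (fun k => (p k : ℝ) / q (k + 1)) atTop (𝓝 (1 / 4)) :=
    tendsto_const_nhds.congr fun k => by push_cast [p, q, pow_succ]; field_simp; norm_num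
  have hlower : 1 - 1 / 2 ≤ d := one_sub_le_of_tendsto_logb_boxCount_multiscaleGrid hp.monotone
    hq.monotone (fun k => Nat.le_mul_of_pos_left _ two_pos) hp.tendsto_atTop hr hd
  have hupper : d ≤ 1 / 4 := le_of_tendsto_logb_boxCount_multiscaleGrid hq.tendsto_atTop hs hd
  linarith
end
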